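/- arXiv:1812.11111 — 3 statements merged into one kernel-verified Lean document; each statement's English description precedes it below -/
import Mathlib

section
/- (Sufficiency half of Theorem 2.) For every integer n ≥ 1 and every vertex v, if for every layer l the number of neighbors w of v in layer l such that alive (n−1) l v w holds is at least k l, then v ∈ S_n. -/
/-- The pruning operator: keep the vertices of `S` that have, in every layer `i`,
at least `k i` neighbors (in layer `i`) inside `S`. -/
def prune {V : Type*} {R : ℕ} (G : Fin R → SimpleGraph V) [∀ i, DecidableRel (G i).Adj]
    (k : Fin R → ℕ) (S : Set V) : Set V :=
  {v | v ∈ S ∧ ∀ i : Fin R, k i ≤ Nat.card {w : V // (G i).Adj v w ∧ w ∈ S}}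

/-- The pruning sequence: `S_0` is the set of all vertices, `S_{n+1} = P (S_n)`. -/
def pruneSeq {V : Type*} {R : ℕ} (G : Fin R → SimpleGraph V) [∀ i, DecidableRel (G i).Adj]
    (k : Fin R → ℕ) : ℕ → Set V
  | 0 => Set.univ
  | n + 1 => prune G k (pruneSeq G k n)

/-- Aliveness of the stub `(e_{[i]}, w)`, where `e_{[i]}` is the layer-`i` edge from `v` to `w`:
`alive 0 i v w` holds whenever `v, w` are adjacent in layer `i`, and `alive (n+1) i v w` holds
iff `v, w` are adjacent in layer `i` and for every layer `l`, the number of vertices `u`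
adjacent to `w` in layer `l` with `(l, u) ≠ (i, v)` such that `alive n l w u` holds is at
least `k l - 1` if `l = i` and at least `k l` otherwise. -/
def alive {V : Type*} {R : ℕ} (G : Fin R → SimpleGraph V) [∀ i, DecidableRel (G i).Adj]
    (k : Fin R → ℕ) : ℕ → Fin R → V → V → Prop
  | 0, i, v, w => (G i).Adj v w
  | n + 1, i, v, w => (G i).Adj v w ∧ ∀ l : Fin R,
      (if l = i then k l - 1 else k l) ≤
        Nat.card {u : V // (G l).Adj w u ∧ (l, u) ≠ (i, v) ∧ alive G k n l w u}

theorem Nat.card_subtype_mono {V : Type*} [Finite V] {p q : V → Prop} (h : ∀ u, p u → q u) :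
    Nat.card {u // p u} ≤ Nat.card {u // q u} :=
  Nat.card_le_card_of_injective (Subtype.map id h) (Subtype.map_injective h Function.injective_id)

theorem Nat.card_subtype_le_card_ne_add_one {V : Type*} [Finite V] (p : V → Prop) (a : V) :
    Nat.card {u // p u} ≤ Nat.card {u // p u ∧ u ≠ a} + 1 := by
  have hsub : {u | p u} ⊆ insert a {u | p u ∧ u ≠ a} := fun u hu => by
    by_cases hua : u = a
    · exact Or.inl hua
    · exact Or.inr ⟨hu, hua⟩
  exact (Set.ncard_le_ncard hsub (Set.toFinite _)).trans (Set.ncard_insert_le _ _)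

theorem Nat.card_subtype_ne_add_one_le {V : Type*} [Finite V] {p : V → Prop} {a : V} (ha : p a) :
    Nat.card {u // p u ∧ u ≠ a} + 1 ≤ Nat.card {u // p u} := by
  have hsub : insert a {u | p u ∧ u ≠ a} ⊆ {u | p u} := by
    rintro u (rfl | hu)
    exacts [ha, hu.1]
  have hcard : (insert a {u | p u ∧ u ≠ a}).ncard = {u | p u ∧ u ≠ a}.ncard + 1 :=
    Set.ncard_insert_of_notMem (fun h => h.2 rfl) (Set.toFinite _)
  exact hcard.symm.le.trans (Set.ncard_le_ncard hsub (Set.toFinite _))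

section Alive

variable {V : Type*} [Finite V] {R : ℕ} (G : Fin R → SimpleGraph V)
  [∀ i, DecidableRel (G i).Adj] (k : Fin R → ℕ)

theorem alive_of_alive_succ (n : ℕ) (i : Fin R) (v w : V) (h : alive G k (n + 1) i v w) :
    alive G k n i v w := by
  induction n generalizing i v w with
  | zero => exact h.1
  | succ n ih =>
    exact ⟨h.1, fun l => (h.2 l).trans
      (Nat.card_subtype_mono fun u hu => ⟨hu.1, hu.2.1, ih l w u hu.2.2⟩)⟩

/-- If `v` has enough alive edges in every layer, then all edges pointing to `v` are alive
one step later. -/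
theorem alive_succ_of_card_alive {n : ℕ} {i : Fin R} {v w : V} (hwv : (G i).Adj w v)
    (h : ∀ l, k l ≤ Nat.card {u : V // (G l).Adj v u ∧ alive G k n l v u}) :
    alive G k (n + 1) i w v := by
  refine ⟨hwv, fun l => ?_⟩
  split_ifs with hl
  · have hcard := Nat.card_subtype_le_card_ne_add_one
      (fun u => (G l).Adj v u ∧ alive G k n l v u) w
    have hmono : Nat.card {u // ((G l).Adj v u ∧ alive G k n l v u) ∧ u ≠ w} ≤
        Nat.card {u // (G l).Adj v u ∧ (l, u) ≠ (i, w) ∧ alive G k n l v u} :=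
      Nat.card_subtype_mono fun u hu =>
        ⟨hu.1.1, fun he => hu.2 (congrArg Prod.snd he), hu.1.2⟩
    have := h l
    omega
  · exact (h l).trans (Nat.card_subtype_mono fun u hu =>
      ⟨hu.1, fun he => hl (congrArg Prod.fst he), hu.2⟩)

/-- If an edge from `v` to `w` is alive and its reverse was alive one step before, then `w` has
enough alive edges in every layer. -/
theorem card_alive_of_alive_succ {n : ℕ} {i : Fin R} {v w : V} (hvw : alive G k (n + 1) i v w)
    (hwv : alive G k n i w v) (l : Fin R) :
    k l ≤ Nat.card {u : V // (G l).Adj w u ∧ alive G k n l w u} := by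
  have hl := hvw.2 l
  split_ifs at hl with hli
  · subst hli
    have hcard := Nat.card_subtype_ne_add_one_le
      (p := fun u => (G l).Adj w u ∧ alive G k n l w u) ⟨hvw.1.symm, hwv⟩
    have hmono : Nat.card {u // (G l).Adj w u ∧ (l, u) ≠ (l, v) ∧ alive G k n l w u} ≤
        Nat.card {u // ((G l).Adj w u ∧ alive G k n l w u) ∧ u ≠ v} :=
      Nat.card_subtype_mono fun u hu =>
        ⟨⟨hu.1, hu.2.2⟩, fun he => hu.2.1 (congrArg (Prod.mk l) he)⟩
    omega
  · exact hl.trans (Nat.card_subtype_mono fun u hu => ⟨hu.1, hu.2.2⟩)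

theorem mem_pruneSeq_succ_of_card_alive (n : ℕ) (v : V)
    (h : ∀ l, k l ≤ Nat.card {w : V // (G l).Adj v w ∧ alive G k n l v w}) :
    v ∈ pruneSeq G k (n + 1) := by
  induction n generalizing v with
  | zero =>
    exact ⟨Set.mem_univ v, fun l =>
      (h l).trans (Nat.card_subtype_mono fun w hw => ⟨hw.1, Set.mem_univ w⟩)⟩
  | succ n ih =>
    have hpred : ∀ l, k l ≤ Nat.card {w : V // (G l).Adj v w ∧ alive G k n l v w} := fun l =>
      (h l).trans (Nat.card_subtype_mono fun w hw => ⟨hw.1, alive_of_alive_succ G k n l v w hw.2⟩)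
    refine ⟨ih v hpred, fun l => (h l).trans (Nat.card_subtype_mono fun w hw => ⟨hw.1, ih w ?_⟩)⟩
    exact card_alive_of_alive_succ G k hw.2
      (alive_of_alive_succ G k n l w v (alive_succ_of_card_alive G k hw.1.symm hpred))

end Alive

/-- Sufficiency half of Theorem 2: for `n ≥ 1`, if in every layer `l` the vertex `v` has at
least `k l` neighbors `w` with `alive (n-1) l v w`, then `v` survives the `n`-th pruning. -/
theorem mem_pruneSeq_of_alive {V : Type*} [Fintype V] {R : ℕ}
    (G : Fin R → SimpleGraph V) [∀ i, DecidableRel (G i).Adj] (k : Fin R → ℕ)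
    (n : ℕ) (hn : 1 ≤ n) (v : V)
    (h : ∀ l : Fin R, k l ≤ Nat.card {w : V // (G l).Adj v w ∧ alive G k (n - 1) l v w}) :
    v ∈ pruneSeq G k n := by
  obtain ⟨m, rfl⟩ := Nat.exists_eq_add_of_le' hn
  exact mem_pruneSeq_succ_of_card_alive G k m v h
end

section
/- (Intermediate claim from the necessity proof of Theorem 2.) For every n ≥ 1, every layer l and all vertices v, w adjacent in layer l: if alive n l v w does NOT hold, then w ∉ S_n; that is, a vertex at the head of a dead stub is removed by the n-th pruning step. -/
/-- A stub whose head survives `n` pruning steps is alive at step `n`. -/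
theorem alive_of_mem_pruneSeq {V : Type*} [Finite V] {R : ℕ}
    (G : Fin R → SimpleGraph V) [∀ i, DecidableRel (G i).Adj] (k : Fin R → ℕ)
    (n : ℕ) (i : Fin R) (v w : V) (hadj : (G i).Adj v w) (hw : w ∈ pruneSeq G k n) :
    alive G k n i v w := by
  induction n generalizing i v w with
  | zero => exact hadj
  | succ n ih =>
    refine ⟨hadj, fun l => ?_⟩
    have hk : k l ≤ {u | (G l).Adj w u ∧ u ∈ pruneSeq G k n}.ncard := hw.2 l
    change _ ≤ {u | (G l).Adj w u ∧ (l, u) ≠ (i, v) ∧ alive G k n l w u}.ncard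
    split_ifs with hl
    · refine (Nat.sub_le_sub_right hk 1).trans
        ((Set.pred_ncard_le_ncard_sdiff_singleton _ v).trans (Set.ncard_le_ncard ?_))
      rintro u ⟨⟨hu, hun⟩, huv⟩
      exact ⟨hu, fun h => huv (congrArg Prod.snd h), ih l w u hu hun⟩
    · refine hk.trans (Set.ncard_le_ncard ?_)
      rintro u ⟨hu, hun⟩
      exact ⟨hu, fun h => hl (congrArg Prod.fst h), ih l w u hu hun⟩

/-- Intermediate claim from the necessity proof of Theorem 2: for `n ≥ 1` and `v, w`
adjacent in layer `l`, if `alive n l v w` fails then `w` is removed by the `n`-th pruning. -/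
theorem not_mem_pruneSeq_of_not_alive {V : Type*} [Fintype V] {R : ℕ}
    (G : Fin R → SimpleGraph V) [∀ i, DecidableRel (G i).Adj] (k : Fin R → ℕ)
    (n : ℕ) (hn : 1 ≤ n) (l : Fin R) (v w : V) (hadj : (G l).Adj v w)
    (h : ¬ alive G k n l v w) : w ∉ pruneSeq G k n :=
  fun hw => h (alive_of_mem_pruneSeq G k n l v w hadj hw)
end

section
/- (Limit version of Theorem 2.) On a finite multi-layer network, a vertex v belongs to the k-core ⋂_{n} S_n if and only if for every layer l the number of neighbors w of v in layer l such that alive n l v w holds for ALL n ≥ 0 is at least k l. -/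
/-- `v` has, in every layer `l`, at least `k l` neighbors `w` with `alive n l v w`. -/
def HasAliveNeighbors {V : Type*} {R : ℕ} (G : Fin R → SimpleGraph V)
    [∀ i, DecidableRel (G i).Adj] (k : Fin R → ℕ) (n : ℕ) (v : V) : Prop :=
  ∀ l : Fin R, k l ≤ Nat.card {w : V // (G l).Adj v w ∧ alive G k n l v w}

theorem Nat.card_subtype_le_of_imp {V : Type*} [Finite V] {p q : V → Prop}
    (h : ∀ w, p w → q w) : Nat.card {w // p w} ≤ Nat.card {w // q w} :=
  Nat.card_mono (Set.toFinite {w | q w}) h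

theorem Nat.card_subtype_sub_one_le {V : Type*} [Finite V] {p q : V → Prop} (a : V)
    (h : ∀ w, p w → w ≠ a → q w) : Nat.card {w // p w} - 1 ≤ Nat.card {w // q w} :=
  (Set.pred_ncard_le_ncard_sdiff_singleton {w | p w} a).trans
    (Set.ncard_le_ncard (t := {w | q w}) (fun w hw => h w hw.1 hw.2) (Set.toFinite _))

theorem Nat.card_subtype_add_one_le {V : Type*} [Finite V] {p q : V → Prop} (a : V)
    (ha : q a) (h : ∀ w, p w → q w ∧ w ≠ a) :
    Nat.card {w // p w} + 1 ≤ Nat.card {w // q w} := by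
  change Set.ncard {w | p w} + 1 ≤ Set.ncard {w | q w}
  rw [← Set.ncard_insert_of_notMem (s := {w | p w}) (a := a) (fun hp => (h a hp).2 rfl) (Set.toFinite _)]
  refine Set.ncard_le_ncard ?_ (Set.toFinite _)
  rintro w (rfl | hw)
  exacts [ha, (h w hw).1]

section

variable {V : Type*} {R : ℕ} {G : Fin R → SimpleGraph V} [∀ i, DecidableRel (G i).Adj]
  {k : Fin R → ℕ} {n : ℕ} {i : Fin R} {v w : V}

theorem alive.adj (h : alive G k n i v w) : (G i).Adj v w := by
  cases n with
  | zero => exact h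
  | succ n => exact h.1

variable [Finite V]

theorem alive.of_succ (h : alive G k (n + 1) i v w) : alive G k n i v w := by
  induction n generalizing i v w with
  | zero => exact h.1
  | succ n ih =>
    exact ⟨h.1, fun l => (h.2 l).trans
      (Nat.card_subtype_le_of_imp fun u hu => ⟨hu.1, hu.2.1, ih hu.2.2⟩)⟩

theorem antitone_alive (G : Fin R → SimpleGraph V) [∀ i, DecidableRel (G i).Adj]
    (k : Fin R → ℕ) (i : Fin R) (v w : V) : Antitone fun n => alive G k n i v w :=
  antitone_nat_of_succ_le fun _ h => h.of_succ

theorem HasAliveNeighbors.of_succ (h : HasAliveNeighbors G k (n + 1) v) :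
    HasAliveNeighbors G k n v :=
  fun l => (h l).trans (Nat.card_subtype_le_of_imp fun _ hw => ⟨hw.1, hw.2.of_succ⟩)

theorem HasAliveNeighbors.alive_succ (h : HasAliveNeighbors G k n w) (hvw : (G i).Adj v w) :
    alive G k (n + 1) i v w := by
  refine ⟨hvw, fun l => ?_⟩
  split_ifs with hl
  · exact (Nat.sub_le_sub_right (h l) 1).trans
      (Nat.card_subtype_sub_one_le v fun u hu huv => ⟨hu.1, by simp [huv], hu.2⟩)
  · exact (h l).trans (Nat.card_subtype_le_of_imp fun u hu => ⟨hu.1, by simp [hl], hu.2⟩)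

theorem alive.hasAliveNeighbors (h : alive G k (n + 1) i v w) (h' : alive G k n i w v) :
    HasAliveNeighbors G k n w := by
  intro l
  have hl := h.2 l
  split_ifs at hl with hli
  · subst hli
    have := Nat.card_subtype_add_one_le
      (p := fun u => (G l).Adj w u ∧ (l, u) ≠ (l, v) ∧ alive G k n l w u)
      (q := fun u => (G l).Adj w u ∧ alive G k n l w u) v ⟨h'.adj, h'⟩
      (fun u hu => ⟨⟨hu.1, hu.2.2⟩, fun huv => hu.2.1 (by rw [huv])⟩)
    omega
  · exact hl.trans (Nat.card_subtype_le_of_imp fun u hu => ⟨hu.1, hu.2.2⟩)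

/-- A vertex survives `n + 1` pruning steps iff it has enough neighbors alive at time `n`. -/
theorem mem_pruneSeq_succ_iff :
    v ∈ pruneSeq G k (n + 1) ↔ HasAliveNeighbors G k n v := by
  induction n generalizing v with
  | zero =>
    simp [pruneSeq, prune, HasAliveNeighbors, alive]
  | succ n ih =>
    constructor
    · intro h l
      exact (h.2 l).trans
        (Nat.card_subtype_le_of_imp fun w hw => ⟨hw.1, (ih.1 hw.2).alive_succ hw.1⟩)
    · intro h
      refine ⟨ih.2 h.of_succ, fun l => (h l).trans (Nat.card_subtype_le_of_imp fun w hw => ?_)⟩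
      exact ⟨hw.1, ih.2 (hw.2.hasAliveNeighbors (h.of_succ.alive_succ hw.1.symm).of_succ)⟩

/-- On a finite vertex set, aliveness of the layer-`i` stubs at `v` stabilizes. -/
theorem exists_alive_imp_forall_alive (G : Fin R → SimpleGraph V)
    [∀ i, DecidableRel (G i).Adj] (k : Fin R → ℕ) (i : Fin R) (v : V) :
    ∃ N, ∀ w, alive G k N i v w → ∀ n, alive G k n i v w := by
  have hstab (w : V) : ∃ N, alive G k N i v w → ∀ n, alive G k n i v w := by
    by_cases h : ∀ n, alive G k n i v w
    · exact ⟨0, fun _ => h⟩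
    · obtain ⟨N, hN⟩ := not_forall.1 h
      exact ⟨N, fun h' => absurd h' hN⟩
  choose f hf using hstab
  obtain ⟨N, hN⟩ := (Set.finite_range f).bddAbove
  exact ⟨N, fun w hw => hf w (antitone_alive G k i v w (hN ⟨w, rfl⟩) hw)⟩

end

/-- Limit version of Theorem 2: on a finite multi-layer network, a vertex `v` belongs to the
k-core `⋂ n, S_n` iff for every layer `l` the number of neighbors `w` of `v` in layer `l`
such that `alive n l v w` holds for all `n` is at least `k l`. -/
theorem mem_kCore_iff_alive {V : Type*} [Fintype V] {R : ℕ}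
    (G : Fin R → SimpleGraph V) [∀ i, DecidableRel (G i).Adj] (k : Fin R → ℕ) (v : V) :
    v ∈ ⋂ n : ℕ, pruneSeq G k n ↔
      ∀ l : Fin R, k l ≤ Nat.card {w : V // (G l).Adj v w ∧ ∀ n : ℕ, alive G k n l v w} := by
  rw [Set.mem_iInter]
  constructor
  · intro h l
    obtain ⟨N, hN⟩ := exists_alive_imp_forall_alive G k l v
    exact (mem_pruneSeq_succ_iff.1 (h (N + 1)) l).trans
      (Nat.card_subtype_le_of_imp fun w hw => ⟨hw.1, hN w hw.2⟩)
  · rintro h (_ | n)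
    · exact Set.mem_univ v
    · exact mem_pruneSeq_succ_iff.2 fun l =>
        (h l).trans (Nat.card_subtype_le_of_imp fun w hw => ⟨hw.1, hw.2 n⟩)
end
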